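/- For every positive integer λ there is a constant C = C(a₁, a₂, λ) > 0 such that for all real x > 1 and y > 1, the number of primes p ≤ x with g_u(p−1) > y is at most C·x/((log y)^λ·log x). -/

import Mathlib

open scoped BigOperators

/-- `gu u n = gcd(n, u n)`. -/
noncomputable def gu (u : ℕ → ℤ) (n : ℕ) : ℕ := Int.gcd (n : ℤ) (u n)

/-- Rank of appearance of `m` in the sequence `u`. -/
noncomputable def zu (u : ℕ → ℤ) (m : ℕ) : ℕ := sInf {n : ℕ | 0 < n ∧ (m : ℤ) ∣ u n}

/-- `ℓ(m) = lcm(m, z_u(m))`. -/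
noncomputable def ellu (u : ℕ → ℤ) (m : ℕ) : ℕ := Nat.lcm m (zu u m)

/-- The arithmetic function `ρ_λ`. -/
noncomputable def rho (lam n : ℕ) : ℝ :=
  (Nat.factorial lam : ℝ) *
    ∑ f ∈ (Fintype.piFinset fun _ : n.primeFactors => Finset.range (lam + 1)) |>.filter
        (fun f => ∑ p, f p = lam),
      ∏ p : n.primeFactors,
        (((n.factorization (p : ℕ) : ℝ) ^ f p - ((n.factorization (p : ℕ) : ℝ) - 1) ^ f p) *
          Real.log ((p : ℕ) : ℝ) ^ f p / (Nat.factorial (f p) : ℝ))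

/-- The set of primes `≤ x`. -/
noncomputable def primesUpTo (x : ℝ) : Finset ℕ :=
  (Finset.range (⌊x⌋₊ + 1)).filter Nat.Prime

/-- `π(x)`, the number of primes `≤ x`. -/
noncomputable def primePi (x : ℝ) : ℕ := (primesUpTo x).card

/-- `π(x; b, a)`, the number of primes `p ≤ x` with `p ≡ a (mod b)`. -/
noncomputable def primePiMod (x : ℝ) (b a : ℕ) : ℕ :=
  ((primesUpTo x).filter fun p => p % b = a % b).card

/-- `Δ(x; b, a) = π(x; b, a) - π(x)/φ(b)`. -/
noncomputable def chebErr (x : ℝ) (b a : ℕ) : ℝ :=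
  (primePiMod x b a : ℝ) - (primePi x : ℝ) / (Nat.totient b : ℝ)


open Finset in
lemma aux_fact_dvd (n d : ℕ) : n.factorial ∣ d ^ n * ∏ k ∈ range n, ((k + 1) * d + 1) := by
  rw [Nat.dvd_iff_prime_pow_dvd_dvd]
  intro q k hq hk
  by_cases hqd : q ∣ d
  · apply Dvd.dvd.mul_right
    have hkn : k ≤ n := by
      have := Fact.mk hq
      have h1 : k ≤ padicValNat q n.factorial :=
        (padicValNat_dvd_iff_le (Nat.factorial_ne_zero n)).1 hk
      rcases Nat.eq_zero_or_pos n with rfl | hn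
      · simpa using h1
      · exact h1.trans (padicValNat_factorial_lt_of_ne_zero q hn.ne').le
    exact (pow_dvd_pow q hkn).trans (pow_dvd_pow_of_dvd hqd n)
  · apply Dvd.dvd.mul_left
    have hcop : Nat.Coprime d (q ^ k) :=
      (Nat.Coprime.pow_left k ((Nat.Prime.coprime_iff_not_dvd hq).2 hqd)).symm
    set M := q ^ k with hM
    have : NeZero M := ⟨by rw [hM]; exact pow_ne_zero _ hq.ne_zero⟩
    -- the inverse of `d` modulo `M`
    let e : ℕ := ((d : ZMod M)⁻¹).val
    have he : (d : ZMod M) * (e : ZMod M) = 1 := by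
      simp only [e, ZMod.natCast_zmod_val]
      exact ZMod.coe_mul_inv_eq_one d hcop
    rw [← ZMod.natCast_eq_zero_iff]
    have h2 : M ∣ (e + 1).ascFactorial n := hk.trans (Nat.factorial_dvd_ascFactorial _ _)
    rw [Nat.ascFactorial_eq_prod_range, ← ZMod.natCast_eq_zero_iff] at h2
    push_cast at h2 ⊢
    have h3 : ∏ x ∈ range n, (((x : ZMod M) + 1) * d + 1)
        = ∏ x ∈ range n, ((d : ZMod M) * ((e : ZMod M) + 1 + x)) := by
      apply prod_congr rfl
      intro x _
      linear_combination -he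
    rw [h3, prod_mul_distrib, h2, mul_zero]

open Finset in
lemma aux_prod_le (n d : ℕ) (hd : 0 < d) (S : Finset ℕ) (hS : ∀ p ∈ S, p.Prime ∧ n < p ∧
    ∃ k < n, p = (k + 1) * d + 1) : n ^ S.card ≤ (n + 1) * d ^ (2 * n) := by
  set P := ∏ k ∈ range n, ((k + 1) * d + 1) with hP
  have h1 : ∏ p ∈ S, p ∣ d ^ n * P := by
    apply Finset.prod_primes_dvd
    · intro p hp; exact (hS p hp).1.prime
    · intro p hp
      obtain ⟨_, _, k, hk, rfl⟩ := hS p hp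
      exact (Finset.dvd_prod_of_mem (fun k => (k + 1) * d + 1) (mem_range.2 hk)).mul_left _
  have h2 : Nat.Coprime (∏ p ∈ S, p) n.factorial := by
    apply Nat.Coprime.prod_left
    intro p hp
    obtain ⟨hpp, hnp, _⟩ := hS p hp
    exact (Nat.coprime_factorial_iff hpp.ne_one).2 (by rw [hpp.minFac_eq]; exact hnp)
  have h3 : (∏ p ∈ S, p) * n.factorial ∣ d ^ n * P :=
    Nat.Coprime.mul_dvd_of_dvd_of_dvd h2 h1 (aux_fact_dvd n d)
  have hPle : P ≤ (n + 1).factorial * d ^ n := by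
    have : (n + 1).factorial * d ^ n = ∏ k ∈ range n, ((k + 2) * d) := by
      rw [prod_mul_distrib]
      simp only [prod_const, card_range]
      congr 1
      rw [← prod_range_add_one_eq_factorial, prod_range_succ']
      simp
    rw [this]
    apply prod_le_prod'
    intro k _
    nlinarith
  have hPpos : 0 < d ^ n * P := by
    apply Nat.mul_pos (pow_pos hd _)
    exact prod_pos (fun k _ => by omega)
  have h4 := Nat.le_of_dvd hPpos h3
  have h5 : (∏ p ∈ S, p) * n.factorial ≤ ((n + 1) * d ^ (2 * n)) * n.factorial := by
    calc _ ≤ d ^ n * P := h4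
      _ ≤ d ^ n * ((n + 1).factorial * d ^ n) := Nat.mul_le_mul_left _ hPle
      _ = _ := by rw [Nat.factorial_succ]; ring
  have h6 := Nat.le_of_mul_le_mul_right h5 n.factorial_pos
  refine le_trans ?_ h6
  apply Finset.pow_card_le_prod
  intro p hp
  exact (hS p hp).2.1.le

/-- number of primes up to x which are 1 mod d -/
noncomputable def cntMod (x : ℝ) (d : ℕ) : ℕ := ((primesUpTo x).filter fun p => d ∣ p - 1).card

lemma aux_mem_primes {x : ℝ} {p : ℕ} (hx : 0 ≤ x) :
    p ∈ primesUpTo x ↔ (p : ℝ) ≤ x ∧ p.Prime := by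
  unfold primesUpTo
  rw [Finset.mem_filter, Finset.mem_range, Nat.lt_succ_iff, Nat.le_floor_iff hx]

lemma aux_cnt_k {x : ℝ} {d p : ℕ} (hd : 0 < d) (hx : 1 < x)
    (hp : p ∈ (primesUpTo x).filter fun p => d ∣ p - 1) :
    ∃ k < ⌊x / d⌋₊, p = (k + 1) * d + 1 := by
  rw [Finset.mem_filter, aux_mem_primes (by linarith)] at hp
  obtain ⟨⟨hpx, hpp⟩, c, hc⟩ := hp
  have h2 := hpp.two_le
  have hcpos : 0 < c := by
    rcases Nat.eq_zero_or_pos c with rfl | h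
    · simp at hc; omega
    · exact h
  refine ⟨c - 1, ?_, ?_⟩
  · have : c ≤ ⌊x / d⌋₊ := by
      rw [Nat.le_floor_iff (by positivity), le_div_iff₀ (by positivity)]
      have : c * d ≤ p := by rw [mul_comm, ← hc]; omega
      have : (c : ℝ) * d ≤ p := by exact_mod_cast this
      linarith
    omega
  · rw [Nat.sub_add_cancel hcpos, mul_comm, ← hc]; omega

lemma aux_cnt_triv {x : ℝ} {d : ℕ} (hd : 0 < d) (hx : 1 < x) : (cntMod x d : ℝ) ≤ x / d := by
  have : cntMod x d ≤ ⌊x / d⌋₊ := by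
    unfold cntMod
    have hsub : ((primesUpTo x).filter fun p => d ∣ p - 1) ⊆
        (Finset.range ⌊x / d⌋₊).image (fun k => (k + 1) * d + 1) := by
      intro p hp
      obtain ⟨k, hk, rfl⟩ := aux_cnt_k hd hx hp
      exact Finset.mem_image.2 ⟨k, Finset.mem_range.2 hk, rfl⟩
    exact (Finset.card_le_card hsub).trans (Finset.card_image_le.trans (by simp))
  exact (Nat.le_floor_iff (by positivity)).1 this

lemma aux_cnt_split {x : ℝ} {d n : ℕ} (hd : 0 < d) (hx : 1 < x) (hn : n = ⌊x / d⌋₊) (hn2 : 2 ≤ n) :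
    (cntMod x d : ℝ) ≤ Nat.primeCounting n
      + (Real.log (n + 1) + 2 * n * Real.log d) / Real.log n := by
  set T := (primesUpTo x).filter fun p => d ∣ p - 1 with hT
  have hc : cntMod x d = (T.filter (fun p => p ≤ n)).card + (T.filter (fun p => ¬ p ≤ n)).card :=
    (Finset.card_filter_add_card_filter_not _).symm
  have h1 : (T.filter (fun p => p ≤ n)).card ≤ Nat.primeCounting n := by
    rw [Nat.primeCounting, Nat.primeCounting', Nat.count_eq_card_filter_range]
    apply Finset.card_le_card
    intro p hp
    rw [Finset.mem_filter, hT, Finset.mem_filter, aux_mem_primes (by linarith)] at hp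
    rw [Finset.mem_filter, Finset.mem_range]
    exact ⟨by omega, hp.1.1.2⟩
  have h2 := aux_prod_le n d hd (T.filter (fun p => ¬ p ≤ n)) (by
    intro p hp
    rw [Finset.mem_filter] at hp
    refine ⟨?_, by omega, hn ▸ aux_cnt_k hd hx hp.1⟩
    have := hp.1
    rw [hT, Finset.mem_filter, aux_mem_primes (by linarith)] at this
    exact this.1.2)
  have hlogn : 0 < Real.log n := Real.log_pos (by exact_mod_cast hn2)
  have h3 : ((T.filter (fun p => ¬ p ≤ n)).card : ℝ) * Real.log n ≤
      Real.log (n + 1) + 2 * n * Real.log d := by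
    have h4 : ((n : ℝ) ^ (T.filter (fun p => ¬ p ≤ n)).card) ≤ ((n : ℝ) + 1) * d ^ (2 * n) := by
      exact_mod_cast h2
    have h5 := Real.log_le_log (by positivity) h4
    have hd' : (d : ℝ) ≠ 0 := by positivity
    rw [Real.log_pow, Real.log_mul (by positivity) (by positivity), Real.log_pow] at h5
    push_cast at h5
    exact h5
  rw [hc]
  push_cast
  have h6 := (le_div_iff₀ hlogn).2 h3
  have h1' : ((T.filter (fun p => p ≤ n)).card : ℝ) ≤ Nat.primeCounting n := by exact_mod_cast h1
  linarith

lemma aux_bt (δ : ℝ) (hδ : 0 < δ) :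
    ∃ C : ℝ, 0 < C ∧ ∀ x : ℝ, 1 < x → ∀ d : ℕ, 0 < d →
      (cntMod x d : ℝ) ≤ C * x / Real.log x * (d : ℝ) ^ (δ - 1) := by
  refine ⟨20 * (1 + 2 / δ), by positivity, ?_⟩
  intro x hx d hd
  have hd1 : (1 : ℝ) ≤ d := by exact_mod_cast hd
  have hd0 : (0 : ℝ) < d := by linarith
  have hlx : 0 < Real.log x := Real.log_pos hx
  have hx0 : 0 < x := by linarith
  have hdδ : (1 : ℝ) ≤ (d : ℝ) ^ δ := Real.one_le_rpow hd1 hδ.le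
  have hpow : (d : ℝ) ^ (δ - 1) = (d : ℝ) ^ δ / d := by rw [Real.rpow_sub hd0, Real.rpow_one]
  have h2δ : 0 < 2 / δ := by positivity
  -- it suffices to bound by t / log x * stuff
  have key : ∀ B : ℝ, (cntMod x d : ℝ) ≤ x / d / Real.log x * B →
      B ≤ 20 * (1 + 2 / δ) * (d : ℝ) ^ δ →
      (cntMod x d : ℝ) ≤ 20 * (1 + 2 / δ) * x / Real.log x * (d : ℝ) ^ (δ - 1) := by
    intro B h1 h2
    calc (cntMod x d : ℝ) ≤ x / d / Real.log x * B := h1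
      _ ≤ x / d / Real.log x * (20 * (1 + 2 / δ) * (d : ℝ) ^ δ) := by
          apply mul_le_mul_of_nonneg_left h2; positivity
      _ = _ := by rw [hpow]; field_simp
  have htriv := aux_cnt_triv hd hx
  have htriv' : (cntMod x d : ℝ) ≤ x / d / Real.log x * Real.log x := by
    rwa [div_mul_cancel₀ _ hlx.ne']
  by_cases hx16 : x < 16
  · apply key _ htriv'
    have : Real.log x ≤ 16 := (Real.log_le_self hx0.le).trans hx16.le
    nlinarith
  push Not at hx16
  by_cases hdx : Real.sqrt x < d
  · apply key _ htriv'
    have h1 := Real.log_le_rpow_div hx0.le (half_pos hδ)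
    have h2 : x ^ (δ / 2) ≤ (d : ℝ) ^ δ := by
      have : x ^ (δ / 2) = (Real.sqrt x) ^ δ := by
        rw [Real.sqrt_eq_rpow, ← Real.rpow_mul hx0.le]; congr 1; ring
      rw [this]
      exact Real.rpow_le_rpow (Real.sqrt_nonneg x) hdx.le hδ.le
    have h3 : x ^ (δ / 2) / (δ / 2) = 2 / δ * x ^ (δ / 2) := by field_simp
    rw [h3] at h1
    nlinarith
  push Not at hdx
  -- main case
  set t := x / d with ht
  have hs4 : 4 ≤ Real.sqrt x := by
    rw [show (4 : ℝ) = Real.sqrt 16 by rw [show (16 : ℝ) = 4 ^ 2 by norm_num]; simp]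
    exact Real.sqrt_le_sqrt hx16
  have hts : Real.sqrt x ≤ t := by
    rw [ht, le_div_iff₀ hd0]
    nlinarith [Real.mul_self_sqrt hx0.le]
  have ht4 : 4 ≤ t := hs4.trans hts
  have ht0 : 0 < t := by linarith
  have hlt : Real.log x / 2 ≤ Real.log t := by
    rw [← Real.log_sqrt hx0.le]
    exact Real.log_le_log (by linarith) hts
  set n := ⌊t⌋₊ with hn
  have hnt : (n : ℝ) ≤ t := Nat.floor_le ht0.le
  have hnt' : t - 1 < n := by have := Nat.lt_floor_add_one t; linarith
  have hn2 : 2 ≤ n := by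
    have : (2 : ℝ) < n := by linarith
    have : 2 < n := by exact_mod_cast this
    omega
  have hst2 : 2 ≤ Real.sqrt t := by
    rw [show (2 : ℝ) = Real.sqrt 4 by rw [show (4 : ℝ) = 2 ^ 2 by norm_num]; simp]
    exact Real.sqrt_le_sqrt ht4
  have hsq := Real.mul_self_sqrt ht0.le
  have hln : Real.log x / 4 ≤ Real.log n := by
    have h1 : Real.sqrt t ≤ n := by nlinarith
    have h2 := Real.log_le_log (by linarith) h1
    rw [Real.log_sqrt ht0.le] at h2
    linarith
  have hmain := aux_cnt_split hd hx hn hn2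
  have hpi := Chebyshev.pi_le_log4_mul_div (x := t) (by linarith)
  rw [← hn] at hpi
  have hlst : Real.log x / 4 ≤ Real.log (Real.sqrt t) := by
    rw [Real.log_sqrt ht0.le]; linarith
  have hlst' : Real.log x / 4 ≤ Real.sqrt t :=
    hlst.trans (Real.log_le_self (Real.sqrt_nonneg t))
  have hlog4 : Real.log 4 ≤ 2 := by
    rw [show (4 : ℝ) = 2 ^ 2 by norm_num, Real.log_pow]
    have := Real.log_two_lt_d9
    push_cast; linarith
  have hlog4' : 0 ≤ Real.log 4 := Real.log_nonneg (by norm_num)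
  have e1 : Real.log 4 * t / Real.log (Real.sqrt t) ≤ t / Real.log x * 8 := by
    calc _ ≤ 2 * t / (Real.log x / 4) := by gcongr
      _ = _ := by field_simp; norm_num
  have e2 : Real.sqrt t ≤ t / Real.log x * 4 := by
    rw [div_mul_eq_mul_div, le_div_iff₀ hlx]
    nlinarith
  have hld : 0 ≤ Real.log d := Real.log_nonneg hd1
  have e3 : (Real.log (n + 1) + 2 * n * Real.log d) / Real.log n ≤
      t / Real.log x * (4 * (1 + 2 * Real.log d)) := by
    have : Real.log (n + 1) ≤ n := by
      have := Real.log_le_sub_one_of_pos (x := (n : ℝ) + 1) (by positivity); linarith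
    calc _ ≤ (t + 2 * t * Real.log d) / (Real.log x / 4) := by gcongr; linarith
      _ = _ := by field_simp
  apply key (16 + 8 * Real.log d)
  · nlinarith
  · have h1 := Real.log_le_rpow_div hd0.le hδ
    have h3 : (d : ℝ) ^ δ / δ = (2 / δ * (d : ℝ) ^ δ) / 2 := by field_simp
    rw [h3] at h1
    nlinarith

lemma aux_binet {R : Type*} [CommRing R] (a₁ a₂ : ℤ)
    (u : ℕ → ℤ) (hu0 : u 0 = 0) (hu1 : u 1 = 1)
    (hrec : ∀ n : ℕ, u (n + 2) = a₁ * u (n + 1) + a₂ * u n)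
    (α β : R) (hs : α + β = a₁) (hp : α * β = -(a₂ : R)) (n : ℕ) :
    (u n : R) * (α - β) = α ^ n - β ^ n := by
  have h : (u n : R) * (α - β) = α ^ n - β ^ n ∧
      (u (n + 1) : R) * (α - β) = α ^ (n + 1) - β ^ (n + 1) := by
    induction n with
    | zero => simp [hu0, hu1]
    | succ n ih =>
      refine ⟨ih.2, ?_⟩
      rw [hrec]
      push_cast
      have ha : (a₂ : R) = -(α * β) := by rw [hp]; ring
      rw [← hs, ha]
      have h1 := ih.1
      have h2 := ih.2
      linear_combination (α + β) * h2 - α * β * h1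
  exact h.1

lemma aux_roots {K : Type*} [Field K] [IsAlgClosed K] (a₁ a₂ : ℤ) :
    ∃ α β : K, α + β = a₁ ∧ α * β = -(a₂ : K) ∧ (α - β) ^ 2 = ((a₁ ^ 2 + 4 * a₂ : ℤ) : K) := by
  obtain ⟨α, hα⟩ := IsAlgClosed.exists_root
    (Polynomial.X ^ 2 - Polynomial.C (a₁ : K) * Polynomial.X - Polynomial.C (a₂ : K)) (by
      have : (Polynomial.X ^ 2 - Polynomial.C (a₁ : K) * Polynomial.X
        - Polynomial.C (a₂ : K)).degree = 2 := by compute_degree!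
      rw [this]; norm_num)
  simp only [Polynomial.IsRoot, Polynomial.eval_sub, Polynomial.eval_pow, Polynomial.eval_X,
    Polynomial.eval_mul, Polynomial.eval_C] at hα
  refine ⟨α, a₁ - α, by ring, by linear_combination -hα, ?_⟩
  push_cast
  linear_combination 4 * hα

lemma aux_rank (a₁ a₂ : ℤ)
    (u : ℕ → ℤ) (hu0 : u 0 = 0) (hu1 : u 1 = 1)
    (hrec : ∀ n : ℕ, u (n + 2) = a₁ * u (n + 1) + a₂ * u n)
    (q : ℕ) (hq : q.Prime) (hqd : ¬ (q : ℤ) ∣ a₂ * (a₁ ^ 2 + 4 * a₂)) :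
    ∃ z : ℕ, (z ≠ 0 → Nat.Coprime q z) ∧ ∀ n, (q : ℤ) ∣ u n ↔ z ∣ n := by
  have := Fact.mk hq
  let K := AlgebraicClosure (ZMod q)
  have : CharP K q := charP_of_injective_algebraMap (algebraMap (ZMod q) K).injective q
  have hcast : ∀ a : ℤ, (a : K) = 0 ↔ (q : ℤ) ∣ a := fun a => CharP.intCast_eq_zero_iff K q a
  obtain ⟨α, β, hs, hp, hd⟩ := aux_roots (K := K) a₁ a₂
  have ha2 : (a₂ : K) ≠ 0 := fun h => hqd (((hcast _).1 h).mul_right _)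
  have hΔ : ((a₁ ^ 2 + 4 * a₂ : ℤ) : K) ≠ 0 := fun h => hqd (((hcast _).1 h).mul_left _)
  have hβ : β ≠ 0 := by
    rintro rfl
    apply ha2
    simpa using hp.symm
  have hne : α - β ≠ 0 := by
    intro h
    rw [h] at hd
    exact hΔ (by rw [← hd]; simp)
  have hiff : ∀ n, (q : ℤ) ∣ u n ↔ (α / β) ^ n = 1 := by
    intro n
    rw [← hcast, div_pow, div_eq_one_iff_eq (pow_ne_zero _ hβ), ← sub_eq_zero (a := α ^ n),
      ← aux_binet a₁ a₂ u hu0 hu1 hrec α β hs hp n]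
    simp [hne]
  refine ⟨orderOf (α / β), ?_, fun n => by rw [hiff, orderOf_dvd_iff_pow_eq_one]⟩
  intro hz
  rw [Nat.Prime.coprime_iff_not_dvd hq]
  rintro ⟨m, hm⟩
  have h1 : ((α / β) ^ m) ^ q = 1 := by
    rw [← pow_mul, mul_comm, ← hm, pow_orderOf_eq_one]
  have h2 : ((α / β) ^ m - 1) ^ q = 0 := by
    rw [sub_pow_char, h1]; simp
  have h3 : (α / β) ^ m = 1 := sub_eq_zero.1 (pow_eq_zero_iff hq.ne_zero |>.1 h2)
  have h4 := orderOf_dvd_of_pow_eq_one h3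
  have hmpos : 0 < m := by
    rcases Nat.eq_zero_or_pos m with rfl | h
    · simp at hm; exact absurd (by simpa using hm) hz
    · exact h
  have h5 := Nat.le_of_dvd hmpos h4
  have := hq.two_le
  nlinarith

lemma aux_ne_zero (a₁ a₂ : ℤ) (ha₂ : a₂ ≠ 0) (hΔ : a₁ ^ 2 + 4 * a₂ ≠ 0)
    (u : ℕ → ℤ) (hu0 : u 0 = 0) (hu1 : u 1 = 1)
    (hrec : ∀ n : ℕ, u (n + 2) = a₁ * u (n + 1) + a₂ * u n)
    (hnd : ∀ α β : ℂ, α ^ 2 = (a₁ : ℂ) * α + (a₂ : ℂ) →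
      β ^ 2 = (a₁ : ℂ) * β + (a₂ : ℂ) → α ≠ β → ∀ k : ℕ, 0 < k → (α / β) ^ k ≠ 1)
    (n : ℕ) (hn : 0 < n) : u n ≠ 0 := by
  intro h0
  obtain ⟨α, β, hs, hp, hd⟩ := aux_roots (K := ℂ) a₁ a₂
  have hβ : β ≠ 0 := by
    rintro rfl
    apply ha₂
    simpa using hp.symm
  have hne : α ≠ β := by
    rintro rfl
    apply hΔ
    have : ((a₁ ^ 2 + 4 * a₂ : ℤ) : ℂ) = 0 := by rw [← hd]; simp
    exact_mod_cast this
  refine hnd α β ?_ ?_ hne n hn ?_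
  · rw [← hs]; linear_combination -hp
  · rw [← hs]; linear_combination -hp
  · have := aux_binet a₁ a₂ u hu0 hu1 hrec α β hs hp n
    rw [h0] at this
    rw [div_pow, div_eq_one_iff_eq (pow_ne_zero _ hβ)]
    exact (sub_eq_zero.1 (by rw [← this]; simp))

lemma aux_growth (a₁ a₂ : ℤ)
    (u : ℕ → ℤ) (hu0 : u 0 = 0) (hu1 : u 1 = 1)
    (hrec : ∀ n : ℕ, u (n + 2) = a₁ * u (n + 1) + a₂ * u n) (n : ℕ) :
    (u n).natAbs ≤ (a₁.natAbs + a₂.natAbs + 1) ^ n := by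
  set K := a₁.natAbs + a₂.natAbs + 1 with hK
  have h : (u n).natAbs ≤ K ^ n ∧ (u (n + 1)).natAbs ≤ K ^ (n + 1) := by
    induction n with
    | zero => simp [hu0, hu1, hK]
    | succ n ih =>
      refine ⟨ih.2, ?_⟩
      rw [hrec]
      have h1 : (u n).natAbs ≤ K ^ (n + 1) := ih.1.trans (Nat.pow_le_pow_right (by omega) (by omega))
      calc (a₁ * u (n + 1) + a₂ * u n).natAbs
          ≤ (a₁ * u (n + 1)).natAbs + (a₂ * u n).natAbs := Int.natAbs_add_le _ _
        _ = a₁.natAbs * (u (n + 1)).natAbs + a₂.natAbs * (u n).natAbs := by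
            rw [Int.natAbs_mul, Int.natAbs_mul]
        _ ≤ a₁.natAbs * K ^ (n + 1) + a₂.natAbs * K ^ (n + 1) :=
            Nat.add_le_add (Nat.mul_le_mul_left _ ih.2) (Nat.mul_le_mul_left _ h1)
        _ ≤ K * K ^ (n + 1) := by rw [← add_mul]; exact Nat.mul_le_mul_right _ (by omega)
        _ = K ^ (n + 1 + 1) := by ring
  exact h.1

lemma aux_omega (m K t : ℕ) (hm : m ≠ 0) (h : m ≤ K ^ t) : m.primeFactors.card ≤ K * t := by
  have h1 : 2 ^ m.primeFactors.card ≤ m := by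
    calc 2 ^ m.primeFactors.card ≤ ∏ p ∈ m.primeFactors, p := by
          apply Finset.pow_card_le_prod
          intro p hp
          exact (Nat.prime_of_mem_primeFactors hp).two_le
      _ ≤ m := Nat.le_of_dvd (Nat.pos_of_ne_zero hm) (Nat.prod_primeFactors_dvd m)
  have h2 : K ^ t ≤ 2 ^ (K * t) := by
    rw [pow_mul]
    exact Nat.pow_le_pow_left (Nat.lt_two_pow_self).le t
  exact (Nat.pow_le_pow_iff_right (by norm_num : 1 < 2)).1 ((h1.trans h).trans h2)

lemma aux_sum_qz : ∃ F : ℝ, 0 < F ∧ ∀ K : ℕ, ∀ (Q : Finset ℕ) (z : ℕ → ℕ),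
    (∀ q ∈ Q, 0 < q) → (∀ q ∈ Q, 0 < z q) →
    (∀ t, (Q.filter (fun q => z q = t)).card ≤ K * t) →
    ∑ q ∈ Q, ((q * z q : ℕ) : ℝ) ^ (-(4 / 5) : ℝ) ≤ F * (K + 1) := by
  have s1 : Summable (fun n : ℕ => (n : ℝ) ^ (-(16 / 15) : ℝ)) :=
    Real.summable_nat_rpow.2 (by norm_num)
  have s2 : Summable (fun n : ℕ => (n : ℝ) ^ (-(11 / 5) : ℝ)) :=
    Real.summable_nat_rpow.2 (by norm_num)
  set A := ∑' n : ℕ, (n : ℝ) ^ (-(16 / 15) : ℝ) with hA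
  set B := ∑' n : ℕ, (n : ℝ) ^ (-(11 / 5) : ℝ) with hB
  have hA0 : 0 ≤ A := tsum_nonneg (fun n => by positivity)
  have hB0 : 0 ≤ B := tsum_nonneg (fun n => by positivity)
  refine ⟨A + B + 1, by positivity, ?_⟩
  intro K Q z hq hz hf
  have hpt : ∀ q ∈ Q, ((q * z q : ℕ) : ℝ) ^ (-(4 / 5) : ℝ) ≤
      (q : ℝ) ^ (-(16 / 15) : ℝ) + (z q : ℝ) ^ (-(16 / 5) : ℝ) := by
    intro q hqQ
    have hq0 : (0 : ℝ) < q := by exact_mod_cast hq q hqQ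
    have hz0 : (0 : ℝ) < z q := by exact_mod_cast hz q hqQ
    push_cast
    rw [Real.mul_rpow hq0.le hz0.le]
    by_cases h : (z q : ℝ) ≤ (q : ℝ) ^ (1 / 3 : ℝ)
    · -- q ≥ z^3
      have h1 : (q : ℝ) ^ (-(4 / 5) : ℝ) ≤ (z q : ℝ) ^ (-(12 / 5) : ℝ) := by
        have : (q : ℝ) ^ (-(4 / 5) : ℝ) = ((q : ℝ) ^ (1 / 3 : ℝ)) ^ (-(12 / 5) : ℝ) := by
          rw [← Real.rpow_mul hq0.le]; norm_num
        rw [this]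
        exact Real.rpow_le_rpow_of_nonpos hz0 h (by norm_num)
      have h2 : (z q : ℝ) ^ (-(16 / 5) : ℝ) = (z q : ℝ) ^ (-(12 / 5) : ℝ) * (z q : ℝ) ^ (-(4 / 5) : ℝ) := by
        rw [← Real.rpow_add hz0]; norm_num
      rw [h2]
      have : 0 ≤ (q : ℝ) ^ (-(16 / 15) : ℝ) := by positivity
      have h3 := mul_le_mul_of_nonneg_right h1 (Real.rpow_nonneg hz0.le (-(4 / 5) : ℝ))
      linarith
    · push Not at h
      have h1 : (z q : ℝ) ^ (-(4 / 5) : ℝ) ≤ (q : ℝ) ^ (-(4 / 15) : ℝ) := by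
        have : (q : ℝ) ^ (-(4 / 15) : ℝ) = ((q : ℝ) ^ (1 / 3 : ℝ)) ^ (-(4 / 5) : ℝ) := by
          rw [← Real.rpow_mul hq0.le]; norm_num
        rw [this]
        exact Real.rpow_le_rpow_of_nonpos (by positivity) h.le (by norm_num)
      have h2 : (q : ℝ) ^ (-(16 / 15) : ℝ) = (q : ℝ) ^ (-(4 / 5) : ℝ) * (q : ℝ) ^ (-(4 / 15) : ℝ) := by
        rw [← Real.rpow_add hq0]; norm_num
      rw [h2]
      have : 0 ≤ (z q : ℝ) ^ (-(16 / 5) : ℝ) := by positivity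
      have h3 := mul_le_mul_of_nonneg_left h1 (Real.rpow_nonneg hq0.le (-(4 / 5) : ℝ))
      linarith
  have hsA : ∑ q ∈ Q, (q : ℝ) ^ (-(16 / 15) : ℝ) ≤ A :=
    s1.sum_le_tsum Q (fun n _ => by positivity)
  have hsB : ∑ q ∈ Q, (z q : ℝ) ^ (-(16 / 5) : ℝ) ≤ K * B := by
    have h1 : ∑ q ∈ Q, (z q : ℝ) ^ (-(16 / 5) : ℝ) =
        ∑ t ∈ Q.image z, ∑ q ∈ Q.filter (fun q => z q = t), (z q : ℝ) ^ (-(16 / 5) : ℝ) :=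
      (Finset.sum_fiberwise_of_maps_to (fun q hq => Finset.mem_image_of_mem z hq) _).symm
    rw [h1]
    calc _ ≤ ∑ t ∈ Q.image z, (K : ℝ) * (t : ℝ) ^ (-(11 / 5) : ℝ) := by
          apply Finset.sum_le_sum
          intro t ht
          obtain ⟨q, hqQ, rfl⟩ := Finset.mem_image.1 ht
          have ht0 : (0 : ℝ) < z q := by exact_mod_cast hz q hqQ
          have : ∑ q' ∈ Q.filter (fun q' => z q' = z q), (z q' : ℝ) ^ (-(16 / 5) : ℝ) =
              ((Q.filter (fun q' => z q' = z q)).card : ℝ) * (z q : ℝ) ^ (-(16 / 5) : ℝ) := by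
            rw [← nsmul_eq_mul, ← Finset.sum_const]
            apply Finset.sum_congr rfl
            intro q' hq'
            rw [(Finset.mem_filter.1 hq').2]
          rw [this]
          have hc : ((Q.filter (fun q' => z q' = z q)).card : ℝ) ≤ K * z q := by
            exact_mod_cast hf (z q)
          have h2 : (z q : ℝ) ^ (-(11 / 5) : ℝ) = z q * (z q : ℝ) ^ (-(16 / 5) : ℝ) := by
            rw [← Real.rpow_one_add' ht0.le (by norm_num)]; norm_num
          rw [h2, ← mul_assoc]
          exact mul_le_mul_of_nonneg_right hc (by positivity)
      _ = K * ∑ t ∈ Q.image z, (t : ℝ) ^ (-(11 / 5) : ℝ) := by rw [Finset.mul_sum]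
      _ ≤ K * B := by
          apply mul_le_mul_of_nonneg_left _ (by positivity)
          exact s2.sum_le_tsum _ (fun n _ => by positivity)
  have hsum := Finset.sum_le_sum hpt
  rw [Finset.sum_add_distrib] at hsum
  have hK : (0 : ℝ) ≤ K := by positivity
  nlinarith

lemma aux_smooth (θ : ℝ) (h1 : 1 / 2 ≤ θ) (h2 : θ ≤ 1) (N : ℕ) (hN : 1 ≤ N) (D : Finset ℕ)
    (hD : ∀ d ∈ D, d ∈ Nat.smoothNumbers N) :
    ∑ d ∈ D, (d : ℝ) ^ (-θ) ≤ Real.exp (4 * (N : ℝ) ^ (1 - θ) * (1 + Real.log N)) := by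
  let f : ℕ →* ℝ :=
    { toFun := fun n => (n : ℝ) ^ (-θ)
      map_one' := by simp
      map_mul' := fun a b => by
        push_cast
        exact Real.mul_rpow (by positivity) (by positivity) }
  have hf : ∀ n : ℕ, f n = (n : ℝ) ^ (-θ) := fun n => rfl
  have hflt : ∀ {p : ℕ}, p.Prime → f p ≤ 3 / 4 := by
    intro p hp
    rw [hf]
    have hp2 : (2 : ℝ) ≤ p := by exact_mod_cast hp.two_le
    calc (p : ℝ) ^ (-θ) ≤ (p : ℝ) ^ (-(1 / 2) : ℝ) :=
          Real.rpow_le_rpow_of_exponent_le (by linarith) (by linarith)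
      _ ≤ (2 : ℝ) ^ (-(1 / 2) : ℝ) :=
          Real.rpow_le_rpow_of_nonpos (by norm_num) hp2 (by norm_num)
      _ ≤ 3 / 4 := by
          rw [Real.rpow_neg (by norm_num), ← Real.sqrt_eq_rpow]
          rw [inv_le_comm₀ (by positivity) (by norm_num)]
          apply Real.le_sqrt_of_sq_le
          norm_num
  have hf0 : ∀ n, 0 ≤ f n := fun n => by rw [hf]; positivity
  have hE := EulerProduct.summable_and_hasSum_smoothNumbers_prod_primesBelow_geometric
    (f := f) (fun {p} hp => by
      rw [Real.norm_of_nonneg (hf0 p)]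
      linarith [hflt hp]) N
  have hle : ∑ d ∈ D, (d : ℝ) ^ (-θ) ≤ ∏ p ∈ Nat.primesBelow N, (1 - f p)⁻¹ := by
    rw [← hE.2.tsum_eq]
    have : ∑ d ∈ D, (d : ℝ) ^ (-θ) = ∑ d ∈ D.subtype (fun d => d ∈ Nat.smoothNumbers N), f d := by
      rw [Finset.sum_subtype_of_mem (fun d => f d) hD]
      exact Finset.sum_congr rfl (fun d _ => (hf d).symm)
    rw [this]
    exact hE.2.summable.sum_le_tsum _ (fun n _ => hf0 _)
  refine hle.trans ?_
  have hprod : ∏ p ∈ Nat.primesBelow N, (1 - f p)⁻¹ ≤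
      ∏ p ∈ Nat.primesBelow N, Real.exp (4 * f p) := by
    apply Finset.prod_le_prod
    · intro p hp
      have := hflt (Nat.prime_of_mem_primesBelow hp)
      rw [inv_nonneg]; linarith
    · intro p hp
      have h3 := hflt (Nat.prime_of_mem_primesBelow hp)
      have h4 := hf0 p
      have h5 := Real.add_one_le_exp (4 * f p)
      refine le_trans ?_ h5
      rw [inv_le_iff_one_le_mul₀ (by linarith)]
      nlinarith
  refine hprod.trans ?_
  rw [← Real.exp_sum, Real.exp_le_exp, ← Finset.mul_sum, mul_assoc]
  apply mul_le_mul_of_nonneg_left _ (by norm_num)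
  have hN0 : (0 : ℝ) < N := by exact_mod_cast hN
  calc ∑ p ∈ Nat.primesBelow N, f p
      ≤ ∑ p ∈ Nat.primesBelow N, (N : ℝ) ^ (1 - θ) * (p : ℝ)⁻¹ := by
        apply Finset.sum_le_sum
        intro p hp
        have hp0 : (0 : ℝ) < p := by
          exact_mod_cast (Nat.prime_of_mem_primesBelow hp).pos
        have hpN : (p : ℝ) ≤ N := by exact_mod_cast (Nat.lt_of_mem_primesBelow hp).le
        have : f p = (p : ℝ) ^ (1 - θ) * (p : ℝ)⁻¹ := by
          rw [hf, ← Real.rpow_neg_one, ← Real.rpow_add hp0]; congr 1; ring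
        rw [this]
        apply mul_le_mul_of_nonneg_right _ (by positivity)
        exact Real.rpow_le_rpow hp0.le hpN (by linarith)
    _ = (N : ℝ) ^ (1 - θ) * ∑ p ∈ Nat.primesBelow N, (p : ℝ)⁻¹ := by rw [Finset.mul_sum]
    _ ≤ (N : ℝ) ^ (1 - θ) * (1 + Real.log N) := by
        apply mul_le_mul_of_nonneg_left _ (by positivity)
        have h6 := harmonic_le_one_add_log N
        rw [harmonic_eq_sum_Icc] at h6
        push_cast at h6
        refine le_trans ?_ h6
        apply Finset.sum_le_sum_of_subset_of_nonneg
        · intro p hp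
          rw [Finset.mem_Icc]
          exact ⟨(Nat.prime_of_mem_primesBelow hp).pos, (Nat.lt_of_mem_primesBelow hp).le⟩
        · intro i _ _; positivity

/-- the elementary asymptotic inequality -/
lemma aux_asymp (A η : ℝ) (lam : ℕ) (hη : 0 < η) :
    ∃ L0 : ℝ, 1 ≤ L0 ∧ ∀ L : ℝ, L0 ≤ L →
      lam * Real.log L + 8 * L ^ (1 / 2 : ℝ) * (2 + A * Real.log L) ≤ η * L := by
  have o1 : (fun L : ℝ => Real.log L) =o[Filter.atTop] fun L : ℝ => L ^ (1 / 4 : ℝ) :=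
    isLittleO_log_rpow_atTop (by norm_num)
  have o1' : ∀ᶠ L : ℝ in Filter.atTop, Real.log L ≤ L ^ (1 / 4 : ℝ) := by
    filter_upwards [o1.bound (c := 1) one_pos, Filter.eventually_ge_atTop 1] with L h hL
    rw [one_mul, Real.norm_of_nonneg (Real.log_nonneg hL),
      Real.norm_of_nonneg (by positivity)] at h
    exact h
  have o2 : ∀ᶠ L : ℝ in Filter.atTop, (lam + 16 + 8 * |A|) / η ≤ L ^ (1 / 4 : ℝ) :=
    (tendsto_rpow_atTop (by norm_num : (0 : ℝ) < 1 / 4)).eventually_ge_atTop _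
  obtain ⟨L0, hL0⟩ := Filter.eventually_atTop.1 (o1'.and o2)
  refine ⟨max L0 1, le_max_right _ _, ?_⟩
  intro L hL
  obtain ⟨h1, h2⟩ := hL0 L ((le_max_left _ _).trans hL)
  have hL1 : 1 ≤ L := (le_max_right _ _).trans hL
  have hL0 : 0 ≤ L := by linarith
  set s := L ^ (1 / 4 : ℝ) with hs
  have hs1 : 1 ≤ s := Real.one_le_rpow hL1 (by norm_num)
  have e1 : L ^ (1 / 2 : ℝ) = s ^ 2 := by
    rw [hs, ← Real.rpow_natCast, ← Real.rpow_mul hL0]; norm_num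
  have e2 : L = s ^ 4 := by
    rw [hs, ← Real.rpow_natCast, ← Real.rpow_mul hL0]; norm_num
  have hlog0 : 0 ≤ Real.log L := Real.log_nonneg hL1
  rw [div_le_iff₀ hη] at h2
  rw [e1]
  have hA : A * Real.log L ≤ |A| * s :=
    (mul_le_mul_of_nonneg_right (le_abs_self A) hlog0).trans
      (mul_le_mul_of_nonneg_left h1 (abs_nonneg A))
  have hs3 : s ≤ s ^ 3 := by nlinarith [mul_self_nonneg s]
  have hs23 : s ^ 2 ≤ s ^ 3 := by nlinarith [mul_self_nonneg s]
  have hlam : (0 : ℝ) ≤ lam := by positivity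
  calc lam * Real.log L + 8 * s ^ 2 * (2 + A * Real.log L)
      ≤ lam * s + 8 * s ^ 2 * (2 + |A| * s) := by gcongr
    _ ≤ lam * s ^ 3 + 16 * s ^ 3 + 8 * |A| * s ^ 3 := by nlinarith
    _ = (lam + 16 + 8 * |A|) * s ^ 3 := by ring
    _ ≤ (s * η) * s ^ 3 := by gcongr
    _ = η * L := by rw [e2]; ring

/-- For every positive integer `λ` there is `C > 0` such that for all
`x, y > 1` the number of primes `p ≤ x` with `g_u(p−1) > y` is at most
`C·x/((log y)^λ·log x)`. -/
theorem statement5 (a₁ a₂ : ℤ) (hcop : IsCoprime a₁ a₂) (ha₂ : a₂ ≠ 0)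
    (hΔ : a₁ ^ 2 + 4 * a₂ ≠ 0)
    (u : ℕ → ℤ) (hu0 : u 0 = 0) (hu1 : u 1 = 1)
    (hrec : ∀ n : ℕ, u (n + 2) = a₁ * u (n + 1) + a₂ * u n)
    (hnd : ∀ α β : ℂ, α ^ 2 = (a₁ : ℂ) * α + (a₂ : ℂ) →
      β ^ 2 = (a₁ : ℂ) * β + (a₂ : ℂ) → α ≠ β → ∀ k : ℕ, 0 < k → (α / β) ^ k ≠ 1)
    (lam : ℕ) (hlam : 0 < lam) :
    ∃ C : ℝ, 0 < C ∧ ∀ x y : ℝ, 1 < x → 1 < y →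
      (((primesUpTo x).filter fun p => y < (gu u (p - 1) : ℝ)).card : ℝ) ≤
        C * x / (Real.log y ^ lam * Real.log x) := by
  classical
  set A : ℕ := 10 * lam with hA
  have hA0 : (0 : ℝ) < A := by rw [hA]; exact_mod_cast (by omega : 0 < 10 * lam)
  have hA10 : (10 : ℝ) ≤ A := by rw [hA]; exact_mod_cast (by omega : 10 ≤ 10 * lam)
  set δ : ℝ := 1 / (4 * A) with hδdef
  have hδ : 0 < δ := by positivity
  have hδ' : δ ≤ 1 / 40 := by
    rw [hδdef]; apply one_div_le_one_div_of_le (by norm_num); linarith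
  obtain ⟨C, hC, hbt⟩ := aux_bt δ hδ
  obtain ⟨F, hF, hsum⟩ := aux_sum_qz
  obtain ⟨L0, hL01, hasym⟩ := aux_asymp A δ lam hδ
  set K := a₁.natAbs + a₂.natAbs + 1 with hK
  set M : ℤ := a₂ * (a₁ ^ 2 + 4 * a₂) with hM
  have hM0 : M ≠ 0 := mul_ne_zero ha₂ hΔ
  have hz' : ∀ q : ℕ, ∃ z : ℕ, q.Prime → ¬ (q : ℤ) ∣ M →
      (z ≠ 0 → Nat.Coprime q z) ∧ ∀ n, (q : ℤ) ∣ u n ↔ z ∣ n := by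
    intro q
    by_cases h : q.Prime ∧ ¬ (q : ℤ) ∣ M
    · obtain ⟨z, hz⟩ := aux_rank a₁ a₂ u hu0 hu1 hrec q h.1 h.2
      exact ⟨z, fun _ _ => hz⟩
    · exact ⟨0, fun h1 h2 => absurd ⟨h1, h2⟩ h⟩
  choose z hz using hz'
  set L1 : ℝ := max L0 (M.natAbs : ℝ) with hL1
  have hL11 : 1 ≤ L1 := hL01.trans (le_max_left _ _)
  set C' : ℝ := C * (F * (K + 1) + 1) + C * L1 ^ lam with hC'
  have hL1pow : 0 < L1 ^ lam := by positivity
  refine ⟨C', by positivity, ?_⟩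
  intro x y hx hy
  have hx0 : 0 < x := by linarith
  have hlx : 0 < Real.log x := Real.log_pos hx
  set L := Real.log y with hL
  have hL0 : 0 < L := Real.log_pos hy
  have hLl : 0 < L ^ lam := by positivity
  set S := (primesUpTo x).filter fun p => y < (gu u (p - 1) : ℝ) with hS
  -- reduction to a bound without the logarithm of x
  have red : ∀ B : ℝ, (S.card : ℝ) ≤ C * x / Real.log x * B → C * (B * L ^ lam) ≤ C' →
      (S.card : ℝ) ≤ C' * x / (L ^ lam * Real.log x) := by
    intro B h1 h2
    refine h1.trans ?_
    rw [le_div_iff₀ (by positivity)]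
    calc C * x / Real.log x * B * (L ^ lam * Real.log x) = C * (B * L ^ lam) * x := by
          field_simp
      _ ≤ C' * x := mul_le_mul_of_nonneg_right h2 hx0.le
  by_cases hsmall : L < L1
  · apply red 1
    · have h1 := hbt x hx 1 one_pos
      simp only [Nat.cast_one, Real.one_rpow] at h1
      refine le_trans ?_ h1
      have : S.card ≤ cntMod x 1 := by
        unfold cntMod
        apply Finset.card_le_card
        intro p hp
        rw [Finset.mem_filter] at hp ⊢
        exact ⟨hp.1, one_dvd _⟩
      exact_mod_cast this
    · rw [one_mul, hC']
      have : L ^ lam ≤ L1 ^ lam := pow_le_pow_left₀ hL0.le hsmall.le lam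
      have h3 : 0 ≤ C * (F * (K + 1) + 1) := by positivity
      nlinarith
  push Not at hsmall
  have hLge1 : 1 ≤ L := hL11.trans hsmall
  set Y : ℝ := L ^ A with hY
  have hY1 : 1 ≤ Y := one_le_pow₀ hLge1
  have hY0 : 0 < Y := by linarith
  have hLY : L ≤ Y := le_self_pow₀ hLge1 (by omega)
  have hYM : (M.natAbs : ℝ) ≤ Y := ((le_max_right _ _).trans hsmall).trans hLY
  set N : ℕ := ⌊Y⌋₊ + 1 with hN
  have hNY : (N : ℝ) ≤ 2 * Y := by
    rw [hN]; push_cast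
    have := Nat.floor_le hY0.le
    linarith
  have hndvd : ∀ q : ℕ, Y < q → ¬ (q : ℤ) ∣ M := by
    intro q hq hdv
    have h1 : q ∣ M.natAbs := Int.natCast_dvd.1 hdv
    have h2 := Nat.le_of_dvd (Int.natAbs_pos.2 hM0) h1
    have h3 : (q : ℝ) ≤ M.natAbs := by exact_mod_cast h2
    linarith
  set Q : Finset ℕ := (Finset.range (⌊x⌋₊ + 1)).filter (fun q : ℕ => q.Prime ∧ Y < (q : ℝ) ∧ z q ≠ 0) with hQ
  set D : Finset ℕ := (Finset.range (⌊x⌋₊ + 1)).filter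
    (fun d : ℕ => d ∈ Nat.smoothNumbers N ∧ y < (d : ℝ)) with hD
  have hcover : S ⊆ (Q.biUnion fun q => (primesUpTo x).filter fun p => (q * z q) ∣ p - 1) ∪
      (D.biUnion fun d => (primesUpTo x).filter fun p => d ∣ p - 1) := by
    intro p hp
    rw [hS, Finset.mem_filter] at hp
    obtain ⟨hpx, hpg⟩ := hp
    have hpx' := (aux_mem_primes hx0.le).1 hpx
    have hp2 := hpx'.2.two_le
    have hpfl : p ≤ ⌊x⌋₊ := (Nat.le_floor_iff hx0.le).2 hpx'.1
    set g := gu u (p - 1) with hg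
    have hg1 : g ∣ p - 1 := by
      have := Int.gcd_dvd_left ((p - 1 : ℕ) : ℤ) (u (p - 1))
      exact Int.natCast_dvd_natCast.1 this
    have hg2 : (g : ℤ) ∣ u (p - 1) := Int.gcd_dvd_right ((p - 1 : ℕ) : ℤ) (u (p - 1))
    have hgle : g ≤ p - 1 := Nat.le_of_dvd (by omega) hg1
    have hgpos : 0 < g := Nat.pos_of_dvd_of_pos hg1 (by omega)
    rw [Finset.mem_union]
    by_cases hq : ∃ q : ℕ, q.Prime ∧ q ∣ g ∧ Y < (q : ℝ)
    · left
      obtain ⟨q, hqp, hqg, hqY⟩ := hq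
      obtain ⟨hc, hd⟩ := hz q hqp (hndvd q hqY)
      have hzd : z q ∣ p - 1 := (hd _).1 ((Int.natCast_dvd_natCast.2 hqg).trans hg2)
      have hz0 : z q ≠ 0 := by
        intro h0
        rw [h0, zero_dvd_iff] at hzd
        omega
      have hqle : q ≤ g := Nat.le_of_dvd hgpos hqg
      rw [Finset.mem_biUnion]
      refine ⟨q, ?_, ?_⟩
      · rw [hQ, Finset.mem_filter, Finset.mem_range]
        exact ⟨by omega, hqp, hqY, hz0⟩
      · rw [Finset.mem_filter]
        exact ⟨hpx, Nat.Coprime.mul_dvd_of_dvd_of_dvd (hc hz0) (hqg.trans hg1) hzd⟩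
    · right
      push Not at hq
      rw [Finset.mem_biUnion]
      refine ⟨g, ?_, ?_⟩
      · rw [hD, Finset.mem_filter, Finset.mem_range]
        refine ⟨by omega, ?_, hpg⟩
        rw [Nat.mem_smoothNumbers']
        intro q hqp hqg
        rw [hN, Nat.lt_succ_iff, Nat.le_floor_iff hY0.le]
        exact hq q hqp hqg
      · rw [Finset.mem_filter]
        exact ⟨hpx, hg1⟩
  have hcard : (S.card : ℝ) ≤ ∑ q ∈ Q, (cntMod x (q * z q) : ℝ) + ∑ d ∈ D, (cntMod x d : ℝ) := by
    have h1 := (Finset.card_le_card hcover).trans (Finset.card_union_le _ _)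
    have h2 := h1.trans (Nat.add_le_add Finset.card_biUnion_le Finset.card_biUnion_le)
    unfold cntMod
    exact_mod_cast h2
  have hQpos : ∀ q ∈ Q, 0 < q ∧ 0 < z q ∧ q.Prime ∧ Y < (q : ℝ) := by
    intro q hq
    rw [hQ, Finset.mem_filter] at hq
    exact ⟨hq.2.1.pos, Nat.pos_of_ne_zero hq.2.2.2, hq.2.1, hq.2.2.1⟩
  have hDpos : ∀ d ∈ D, 0 < d ∧ y < (d : ℝ) ∧ d ∈ Nat.smoothNumbers N := by
    intro d hd
    rw [hD, Finset.mem_filter] at hd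
    refine ⟨?_, hd.2.2, hd.2.1⟩
    have : (0 : ℝ) < d := by linarith [hd.2.2]
    exact_mod_cast this
  -- the sum over q
  have hfib : ∀ t, (Q.filter (fun q => z q = t)).card ≤ K * t := by
    intro t
    rcases Nat.eq_zero_or_pos t with rfl | ht
    · rw [Nat.mul_zero, Nat.le_zero, Finset.card_eq_zero, Finset.filter_eq_empty_iff]
      intro q hq
      exact (hQpos q hq).2.1.ne'
    · have hut := aux_ne_zero a₁ a₂ ha₂ hΔ u hu0 hu1 hrec hnd t ht
      refine le_trans (Finset.card_le_card ?_)
        (aux_omega (u t).natAbs K t (Int.natAbs_ne_zero.2 hut)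
          (aux_growth a₁ a₂ u hu0 hu1 hrec t))
      intro q hq
      rw [Finset.mem_filter] at hq
      obtain ⟨hqQ, rfl⟩ := hq
      obtain ⟨_, _, hqp, hqY⟩ := hQpos q hqQ
      rw [Nat.mem_primeFactors]
      refine ⟨hqp, ?_, Int.natAbs_ne_zero.2 hut⟩
      exact Int.natCast_dvd.1 (((hz q hqp (hndvd q hqY)).2 _).2 dvd_rfl)
  have hsumQ := hsum K Q z (fun q hq => (hQpos q hq).1) (fun q hq => (hQpos q hq).2.1) hfib
  have hYsave : Y ^ (-(1 / 10) : ℝ) = (L ^ lam)⁻¹ := by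
    rw [hY, ← Real.rpow_natCast L A, ← Real.rpow_mul hL0.le, ← Real.rpow_natCast L lam,
      ← Real.rpow_neg hL0.le]
    congr 1
    rw [hA]; push_cast; ring
  have hB1 : ∑ q ∈ Q, ((q * z q : ℕ) : ℝ) ^ (δ - 1) ≤ (L ^ lam)⁻¹ * (F * (K + 1)) := by
    calc _ ≤ ∑ q ∈ Q, (L ^ lam)⁻¹ * ((q * z q : ℕ) : ℝ) ^ (-(4 / 5) : ℝ) := by
          apply Finset.sum_le_sum
          intro q hq
          obtain ⟨h1, h2, _, h4⟩ := hQpos q hq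
          have hm1 : Y ≤ ((q * z q : ℕ) : ℝ) := by
            have : q ≤ q * z q := Nat.le_mul_of_pos_right q h2
            have : (q : ℝ) ≤ ((q * z q : ℕ) : ℝ) := by exact_mod_cast this
            linarith
          set m : ℝ := ((q * z q : ℕ) : ℝ) with hm
          have hm0 : 0 < m := by linarith
          calc m ^ (δ - 1) ≤ m ^ (-(1 / 10) + -(4 / 5) : ℝ) :=
                Real.rpow_le_rpow_of_exponent_le (by linarith) (by linarith)
            _ = m ^ (-(1 / 10) : ℝ) * m ^ (-(4 / 5) : ℝ) := Real.rpow_add hm0 _ _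
            _ ≤ Y ^ (-(1 / 10) : ℝ) * m ^ (-(4 / 5) : ℝ) := by
                apply mul_le_mul_of_nonneg_right _ (by positivity)
                exact Real.rpow_le_rpow_of_nonpos hY0 hm1 (by norm_num)
            _ = _ := by rw [hYsave]
      _ = (L ^ lam)⁻¹ * ∑ q ∈ Q, ((q * z q : ℕ) : ℝ) ^ (-(4 / 5) : ℝ) := by
          rw [Finset.mul_sum]
      _ ≤ _ := mul_le_mul_of_nonneg_left hsumQ (by positivity)
  -- the sum over smooth d
  have hy0 : 0 < y := by linarith
  have hN1 : 1 ≤ N := by omega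
  have hNpos : (0 : ℝ) < N := by exact_mod_cast hN1
  have hsm := aux_smooth (1 - 2 * δ) (by linarith) (by linarith) N hN1 D
    (fun d hd => (hDpos d hd).2.2)
  have hlogN : Real.log N ≤ 1 + A * Real.log L := by
    calc Real.log N ≤ Real.log (2 * Y) := Real.log_le_log hNpos hNY
      _ = Real.log 2 + A * Real.log L := by
          rw [Real.log_mul (by norm_num) hY0.ne', hY, Real.log_pow]
      _ ≤ _ := by have := Real.log_two_lt_d9; linarith
  have hNpow : (N : ℝ) ^ (1 - (1 - 2 * δ)) ≤ 2 * L ^ (1 / 2 : ℝ) := by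
    have e : 1 - (1 - 2 * δ) = 2 * δ := by ring
    rw [e]
    calc (N : ℝ) ^ (2 * δ) ≤ (2 * Y) ^ (2 * δ) :=
          Real.rpow_le_rpow hNpos.le hNY (by positivity)
      _ = 2 ^ (2 * δ) * Y ^ (2 * δ) := Real.mul_rpow (by norm_num) hY0.le
      _ ≤ 2 * L ^ (1 / 2 : ℝ) := by
          have h1 : (2 : ℝ) ^ (2 * δ) ≤ 2 := by
            calc (2 : ℝ) ^ (2 * δ) ≤ 2 ^ (1 : ℝ) :=
                  Real.rpow_le_rpow_of_exponent_le (by norm_num) (by linarith)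
              _ = 2 := Real.rpow_one 2
          have h2 : Y ^ (2 * δ) = L ^ (1 / 2 : ℝ) := by
            rw [hY, ← Real.rpow_natCast L A, ← Real.rpow_mul hL0.le]
            congr 1
            rw [hδdef]; field_simp; norm_num
          rw [h2]
          exact mul_le_mul_of_nonneg_right h1 (by positivity)
  have hlogL0 : 0 ≤ Real.log L := Real.log_nonneg hLge1
  have hlogN0 : 0 ≤ Real.log N := Real.log_nonneg (by exact_mod_cast hN1)
  have hB2 : ∑ d ∈ D, (d : ℝ) ^ (δ - 1) ≤ (L ^ lam)⁻¹ := by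
    calc _ ≤ ∑ d ∈ D, y ^ (-δ) * (d : ℝ) ^ (-(1 - 2 * δ)) := by
          apply Finset.sum_le_sum
          intro d hd
          obtain ⟨h1, h2, _⟩ := hDpos d hd
          have hd0 : (0 : ℝ) < d := by exact_mod_cast h1
          have : (d : ℝ) ^ (δ - 1) = (d : ℝ) ^ (-δ) * (d : ℝ) ^ (-(1 - 2 * δ)) := by
            rw [← Real.rpow_add hd0]; congr 1; ring
          rw [this]
          apply mul_le_mul_of_nonneg_right _ (by positivity)
          exact Real.rpow_le_rpow_of_nonpos hy0 h2.le (by linarith)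
      _ = y ^ (-δ) * ∑ d ∈ D, (d : ℝ) ^ (-(1 - 2 * δ)) := by rw [Finset.mul_sum]
      _ ≤ y ^ (-δ) * Real.exp (8 * L ^ (1 / 2 : ℝ) * (2 + A * Real.log L)) := by
          apply mul_le_mul_of_nonneg_left _ (by positivity)
          refine hsm.trans ?_
          rw [Real.exp_le_exp]
          calc 4 * (N : ℝ) ^ (1 - (1 - 2 * δ)) * (1 + Real.log N)
              ≤ 4 * (2 * L ^ (1 / 2 : ℝ)) * (1 + (1 + A * Real.log L)) := by gcongr
            _ = _ := by ring
      _ ≤ (L ^ lam)⁻¹ := by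
          rw [Real.rpow_def_of_pos hy0, ← hL, ← Real.exp_add]
          have h1 : (L ^ lam)⁻¹ = Real.exp (-(lam * Real.log L)) := by
            rw [Real.exp_neg, ← Real.log_pow, Real.exp_log hLl]
          rw [h1, Real.exp_le_exp]
          have := hasym L ((le_max_left _ _).trans hsmall)
          linarith
  apply red ((L ^ lam)⁻¹ * (F * (K + 1)) + (L ^ lam)⁻¹)
  · have h1 : ∑ q ∈ Q, (cntMod x (q * z q) : ℝ) ≤
        C * x / Real.log x * ∑ q ∈ Q, ((q * z q : ℕ) : ℝ) ^ (δ - 1) := by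
      rw [Finset.mul_sum]
      exact Finset.sum_le_sum fun q hq =>
        hbt x hx _ (Nat.mul_pos (hQpos q hq).1 (hQpos q hq).2.1)
    have h2 : ∑ d ∈ D, (cntMod x d : ℝ) ≤
        C * x / Real.log x * ∑ d ∈ D, (d : ℝ) ^ (δ - 1) := by
      rw [Finset.mul_sum]
      exact Finset.sum_le_sum fun d hd => hbt x hx _ (hDpos d hd).1
    have hpos : 0 ≤ C * x / Real.log x := by positivity
    have h3 := mul_le_mul_of_nonneg_left hB1 hpos
    have h4 := mul_le_mul_of_nonneg_left hB2 hpos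
    rw [mul_add]
    linarith
  · have e : ((L ^ lam)⁻¹ * (F * (K + 1)) + (L ^ lam)⁻¹) * L ^ lam = F * (K + 1) + 1 := by
      field_simp
    rw [e, hC']
    have : 0 ≤ C * L1 ^ lam := by positivity
    linarith
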